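/- Let d ≥ 2. The number of permutations β of {0, 1, ..., d} satisfying β(0) = 0, β(1) = d, and β(i+1) + β(d+1-i) = d for all 1 ≤ i ≤ d-1 equals 2^{⌈d/2⌉ - 1}·⌊(d-1)/2⌋!. -/

import Mathlib

/-!
Shifting the argument cyclically, `γ j = β (j + 1)` (indices mod `d + 1`), turns the relations
`β (i + 1) + β (d + 1 - i) = d` into `γ i + γ (d - i) = d` for `0 < i < d`, and the two prescribed
values `β 0 = 0`, `β 1 = d` give the remaining relation `γ 0 + γ d = d`. So the permutations to be
counted are those that commute with the reversal of `{0, …, d}` and send `0` to `d`. The centralizer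
of an involution moving `2k` points acts transitively on these points, so by orbit-stabilizer a
fraction `1 / (2k)` of it sends `0` to `d`; for the reversal, `k = ⌊(d + 1) / 2⌋` and
`2 ^ k * k! / (2k) = 2 ^ (k - 1) * (k - 1)!`.
-/

open Equiv Equiv.Perm MulAction Subgroup
open scoped Nat Finset

theorem card_orbit_mul_card_smul_eq {G X : Type*} [Group G] [MulAction G X] {x y : X}
    (hy : y ∈ orbit G x) :
    Nat.card (orbit G x) * Nat.card {g : G // g • x = y} = Nat.card G := by
  obtain ⟨h, rfl⟩ := hy
  let translate : stabilizer G x ≃ {g : G // g • x = h • x} :=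
    (Equiv.mulLeft h).subtypeEquiv fun g => by
      rw [coe_mulLeft, mul_smul, smul_left_cancel_iff, mem_stabilizer_iff]
  rw [← Nat.card_congr translate, ← Nat.card_prod]
  exact Nat.card_congr (orbitProdStabilizerEquivGroup G x)

section Centralizer

variable {α : Type*} {σ : Perm α} {x y : α}

theorem commute_swap_swap_of_involutive [DecidableEq α] (hσ : Function.Involutive σ)
    (hx : σ x ≠ x) (hy : σ y ≠ y) : Commute (swap x y) (swap (σ x) (σ y)) := by
  rcases eq_or_ne x y with rfl | hne
  · rw [swap_self]
    exact Commute.one_left _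
  rcases eq_or_ne (σ x) y with rfl | hxy
  · rw [hσ, swap_comm]
  have hyx : σ y ≠ x := fun h => hxy (by rw [← h, hσ])
  refine (disjoint_swap_swap ?_).commute
  simp [hne, hx.symm, hy.symm, hxy.symm, hyx.symm]

theorem swap_mul_swap_mem_centralizer [DecidableEq α] (hσ : Function.Involutive σ)
    (hx : σ x ≠ x) (hy : σ y ≠ y) : swap x y * swap (σ x) (σ y) ∈ centralizer {σ} := by
  have hconj : σ * swap (σ x) (σ y) = swap x y * σ := by
    rw [mul_swap_eq_swap_mul, hσ, hσ]
  rw [mem_centralizer_singleton_iff]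
  calc swap x y * swap (σ x) (σ y) * σ
      = swap (σ x) (σ y) * (swap x y * σ) := by
        rw [(commute_swap_swap_of_involutive hσ hx hy).eq, mul_assoc]
    _ = swap (σ x) (σ y) * σ * swap (σ x) (σ y) := by rw [← hconj, mul_assoc]
    _ = σ * (swap x y * swap (σ x) (σ y)) := by rw [← mul_swap_eq_swap_mul, mul_assoc]

theorem orbit_centralizer_of_involutive (hσ : Function.Involutive σ) (hx : σ x ≠ x) :
    orbit (centralizer {σ}) x = {y | σ y ≠ y} := by
  classical
  ext y
  constructor
  · rintro ⟨⟨g, hg⟩, rfl⟩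
    have hcomm : g (σ x) = σ (g x) :=
      DFunLike.congr_fun (mem_centralizer_singleton_iff.mp hg) x
    change σ (g x) ≠ g x
    rwa [← hcomm, g.injective.ne_iff]
  · intro hy
    by_cases hxy : σ x = y
    · exact ⟨⟨σ, mem_centralizer_singleton_iff.mpr rfl⟩, hxy⟩
    · refine ⟨⟨_, swap_mul_swap_mem_centralizer hσ hx hy⟩, ?_⟩
      have hyx : x ≠ σ y := fun h => hxy (by rw [h, hσ])
      change swap x y (swap (σ x) (σ y) x) = y
      rw [swap_apply_of_ne_of_ne hx.symm hyx, swap_apply_left]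

variable [Fintype α] [DecidableEq α]

theorem card_centralizer_of_pow_prime_eq_one {p : ℕ} [hp : Fact p.Prime] (hσ : σ ^ p = 1) :
    Nat.card (centralizer {σ}) =
      (Fintype.card α - #σ.support)! * p ^ (#σ.support / p) * (#σ.support / p)! := by
  obtain ⟨k, hk⟩ : ∃ k, σ.cycleType = Multiset.replicate k p :=
    ⟨_, cycleType_of_pow_prime_eq_one hσ⟩
  have hsupport : #σ.support = k * p := by
    rw [← sum_cycleType, hk, Multiset.sum_replicate, smul_eq_mul]
  rw [nat_card_centralizer, sum_cycleType, hk, Multiset.prod_replicate, hsupport,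
    Nat.mul_div_cancel _ hp.out.pos]
  rcases eq_or_ne k 0 with rfl | hk0
  · simp
  · simp [Multiset.toFinset_replicate, hk0]

theorem card_centralizer_apply_eq_of_involutive (hσ : Function.Involutive σ) (hx : σ x ≠ x)
    (hy : σ y ≠ y) {k : ℕ} (hk : #σ.support = 2 * k) :
    Nat.card {g : centralizer {σ} // g • x = y} =
      (Fintype.card α - 2 * k)! * 2 ^ (k - 1) * (k - 1)! := by
  have horbit := orbit_centralizer_of_involutive hσ hx
  have hcardOrbit : Nat.card (orbit (centralizer {σ}) x) = 2 * k := by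
    rw [horbit, ← coe_support_eq_set_support, Nat.card_coe_set_eq, Set.ncard_coe_finset, hk]
  have hcard := card_orbit_mul_card_smul_eq (horbit.symm ▸ hy : y ∈ orbit (centralizer {σ}) x)
  have hsq : σ ^ 2 = 1 := Equiv.ext fun z => by rw [sq, mul_apply, hσ, one_apply]
  rw [hcardOrbit, card_centralizer_of_pow_prime_eq_one hsq, hk,
    Nat.mul_div_cancel_left k two_pos] at hcard
  have hsupport : 0 < #σ.support := Finset.card_pos.mpr ⟨x, mem_support.mpr hx⟩
  have hpos : 0 < 2 * k := hk ▸ hsupport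
  obtain ⟨m, rfl⟩ : ∃ m, k = m + 1 := ⟨k - 1, by omega⟩
  refine Nat.eq_of_mul_eq_mul_left hpos (hcard.trans ?_)
  rw [Nat.add_sub_cancel, Nat.factorial_succ m]
  ring

end Centralizer

theorem rev_eq_self_iff {n : ℕ} {i : Fin n} : i.rev = i ↔ 2 * i.val + 1 = n := by
  rw [Fin.ext_iff, Fin.val_rev]
  omega

theorem card_support_revPerm (n : ℕ) : #(Fin.revPerm : Perm (Fin n)).support = 2 * (n / 2) := by
  have hfixed (i : Fin n) :
      i ∈ (Fin.revPerm : Perm (Fin n)).supportᶜ ↔ 2 * i.val + 1 = n := by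
    rw [Finset.mem_compl, notMem_support, Fin.revPerm_apply, rev_eq_self_iff]
  have hcard : #(Fin.revPerm : Perm (Fin n)).supportᶜ = n % 2 := by
    rcases Nat.mod_two_eq_zero_or_one n with heven | hodd
    · rw [heven, Finset.card_eq_zero, Finset.eq_empty_iff_forall_notMem]
      intro i hi
      have := (hfixed i).mp hi
      omega
    · rw [hodd, Finset.card_eq_one]
      refine ⟨⟨n / 2, by omega⟩, Finset.ext fun i => ?_⟩
      rw [hfixed, Finset.mem_singleton, Fin.eq_mk_iff_val_eq]
      omega
  have := Finset.card_add_card_compl (Fin.revPerm : Perm (Fin n)).support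
  rw [hcard, Fintype.card_fin] at this
  omega

theorem mem_centralizer_revPerm_iff {d : ℕ} {γ : Perm (Fin (d + 1))} :
    γ ∈ centralizer {Fin.revPerm} ↔ ∀ i, (γ i : ℕ) + γ i.rev = d := by
  rw [mem_centralizer_singleton_iff, Equiv.ext_iff]
  refine forall_congr' fun i => ?_
  simp only [mul_apply, Fin.revPerm_apply, Fin.ext_iff, Fin.val_rev]
  omega

theorem card_centralizer_revPerm_apply_zero_eq_last (n : ℕ) :
    Nat.card {γ : Perm (Fin (n + 2)) // γ ∈ centralizer {Fin.revPerm} ∧ γ 0 = Fin.last (n + 1)} =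
      2 ^ (n / 2) * (n / 2)! := by
  have hzero : Fin.rev (0 : Fin (n + 2)) ≠ 0 := by
    rw [Fin.rev_zero]
    exact Fin.last_pos.ne'
  have hlast : Fin.rev (Fin.last (n + 1)) ≠ Fin.last (n + 1) := by
    rw [Fin.rev_last]
    exact Fin.last_pos.ne
  have hsupport : #(Fin.revPerm : Perm (Fin (n + 2))).support = 2 * (n / 2 + 1) := by
    rw [card_support_revPerm, Nat.add_div_right n two_pos]
  calc
    _ = Nat.card {g : centralizer {(Fin.revPerm : Perm (Fin (n + 2)))} //
          g • 0 = Fin.last (n + 1)} :=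
      Nat.card_congr
        (Equiv.subtypeSubtypeEquivSubtypeInter _ fun γ : Perm _ => γ 0 = Fin.last (n + 1)).symm
    _ = (n + 2 - 2 * (n / 2 + 1))! * 2 ^ (n / 2) * (n / 2)! := by
      rw [card_centralizer_apply_eq_of_involutive Fin.rev_involutive hzero hlast hsupport,
        Fintype.card_fin, Nat.add_sub_cancel]
    _ = 2 ^ (n / 2) * (n / 2)! := by
      rw [Nat.factorial_eq_one.mpr (by omega), one_mul]

theorem mul_finRotate_mem_centralizer_revPerm_iff {n : ℕ} (β : Perm (Fin (n + 2))) :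
    (β * finRotate (n + 2) ∈ centralizer {Fin.revPerm} ∧
      (β * finRotate (n + 2)) 0 = Fin.last (n + 1)) ↔
    β 0 = 0 ∧ β 1 = Fin.last (n + 1) ∧
      ∀ (i : ℕ) (_ : 1 ≤ i) (_ : i ≤ n),
        (β ⟨i + 1, by omega⟩).val + (β ⟨n + 2 - i, by omega⟩).val = n + 1 := by
  have hzero : (β * finRotate (n + 2)) 0 = β 1 := by
    rw [mul_apply, finRotate_apply_zero]
  have hlast : (β * finRotate (n + 2)) (Fin.last (n + 1)) = β 0 := by
    rw [mul_apply, finRotate_last]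
  have hlt (i : ℕ) (hi : i < n + 1) :
      (β * finRotate (n + 2)) ⟨i, by omega⟩ = β ⟨i + 1, by omega⟩ := by
    rw [mul_apply, finRotate_of_lt hi]
  have hrev (i : ℕ) (h1 : 1 ≤ i) (h2 : i ≤ n) :
      (β * finRotate (n + 2)) (Fin.rev ⟨i, by omega⟩) = β ⟨n + 2 - i, by omega⟩ := by
    have harg : Fin.rev (⟨i, by omega⟩ : Fin (n + 2)) = ⟨n + 1 - i, by omega⟩ :=
      Fin.ext (Nat.add_sub_add_right (n + 1) 1 i)
    rw [harg, hlt (n + 1 - i) (by omega)]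
    congr 2
    omega
  rw [mem_centralizer_revPerm_iff]
  constructor
  · rintro ⟨h, h0⟩
    refine ⟨?_, hzero.symm.trans h0, fun i h1 h2 => ?_⟩
    · have := h 0
      rw [h0, Fin.rev_zero, hlast, Fin.val_last] at this
      exact Fin.ext (by simpa using this)
    · rw [← hlt i (by omega), ← hrev i h1 h2]
      exact h _
  · rintro ⟨h0, h1, h⟩
    refine ⟨fun i => ?_, hzero.trans h1⟩
    rcases eq_or_ne i 0 with rfl | hi0
    · simp [hzero, hlast, h0, h1]
    rcases eq_or_ne i (Fin.last (n + 1)) with rfl | hilast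
    · simp [hzero, hlast, h0, h1]
    have hpos : i.val ≠ 0 := Fin.val_ne_zero_iff.mpr hi0
    have hilt : i.val < n + 1 := Fin.val_lt_last hilast
    have := h i (by omega) (by omega)
    rwa [← hlt i hilt, ← hrev i (by omega) (by omega)] at this

theorem stmt_10 (d : ℕ) (hd : 2 ≤ d) :
    Nat.card {β : Equiv.Perm (Fin (d + 1)) //
        β 0 = 0 ∧
        β ⟨1, by omega⟩ = ⟨d, by omega⟩ ∧
        ∀ (i : ℕ) (_h1 : 1 ≤ i) (_h2 : i ≤ d - 1),
          (β ⟨i + 1, by omega⟩).val + (β ⟨d + 1 - i, by omega⟩).val = d}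
      = 2 ^ ((d + 1) / 2 - 1) * Nat.factorial ((d - 1) / 2) := by
  obtain ⟨n, rfl⟩ : ∃ n, d = n + 1 := ⟨d - 1, by omega⟩
  calc
    _ = Nat.card {γ : Perm (Fin (n + 2)) //
          γ ∈ centralizer {Fin.revPerm} ∧ γ 0 = Fin.last (n + 1)} :=
      Nat.card_congr ((Equiv.mulRight (finRotate (n + 2))).subtypeEquiv
        fun β => (mul_finRotate_mem_centralizer_revPerm_iff β).symm)
    _ = 2 ^ (n / 2) * (n / 2)! := card_centralizer_revPerm_apply_zero_eq_last n
    _ = 2 ^ ((n + 2) / 2 - 1) * (n / 2)! := by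
      rw [Nat.add_div_right n two_pos, Nat.succ_sub_one]
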